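/- arXiv:1007.3479 — 2 statements merged into one kernel-verified Lean document; each statement's English description precedes it below -/
import Mathlib

section
/- Let p be a prime with p > 2(h−1), where h is the Coxeter number of Φ. Let w1, w2, w3 ∈ W and suppose w1·0 + w2·0 = w3·0 + pσ for some σ ∈ ℤΦ. Then σ = 0. -/
/-!
Rewrite the hypothesis as `w₁ρ + w₂ρ - w₃ρ - ρ = pσ` and let `γ` be a short root.  Moving `w` to
the other side, `(wρ, γ∨) = (ρ, δ∨)` for a short root `δ ≤ α₀`, and since `ρ` is dominant this is
at most `(ρ, α₀∨) = h - 1` in absolute value.  Hence `p (σ, γ∨) ≤ 4(h - 1) < 2p`, and so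
`(σ, γ∨) < 2`.

By irreducibility the short roots generate `ℤΦ`, so `σ = β₁ + ⋯ + βₖ` with all `βᵢ` short.  If
`σ ≠ 0`, then `∑ (σ, βᵢ) = (σ, σ) > 0`, so some `(σ, βᵢ∨)` is positive, hence equal to `1`.  Thus
the reflection of `σ` in `βᵢ` is `σ - βᵢ`, a nonzero sum of `k - 1` short roots which again pairs
to less than `2` with every short coroot; descending on `k` gives a contradiction.
-/

open scoped RealInnerProductSpace

namespace PaperDNN

variable {E : Type*} [NormedAddCommGroup E] [InnerProductSpace ℝ E]

/-- The coroot pairing `⟨x, α∨⟩ = 2⟪x,α⟫/⟪α,α⟫`. -/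
noncomputable def pair (x a : E) : ℝ := 2 * ⟪x, a⟫ / ⟪a, a⟫

/-- `Φ` is a reduced irreducible root system in the Euclidean space `E`. -/
structure IsRootSystem (Φ : Finset E) : Prop where
  nonempty : Φ.Nonempty
  ne_zero : ∀ α ∈ Φ, α ≠ 0
  span_top : Submodule.span ℝ (Φ : Set E) = ⊤
  reduced : ∀ α ∈ Φ, ∀ t : ℝ, t • α ∈ Φ → t = 1 ∨ t = -1
  reflect_mem : ∀ α ∈ Φ, ∀ β ∈ Φ, β - pair β α • α ∈ Φ
  pair_int : ∀ α ∈ Φ, ∀ β ∈ Φ, ∃ n : ℤ, pair β α = (n : ℝ)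
  irred : ∀ S T : Set E, S ∪ T = (Φ : Set E) → S.Nonempty → T.Nonempty →
      (∀ a ∈ S, ∀ b ∈ T, ⟪a, b⟫ = 0) → False

/-- `Δ` is a base of simple roots for `Φ`: every root is a nonnegative or
nonpositive integral combination of the simple roots. -/
structure IsBase (Φ Δ : Finset E) : Prop where
  subset : Δ ⊆ Φ
  indep : LinearIndependent ℝ (fun a : {x // x ∈ Δ} => (a : E))
  root_decomp : ∀ β ∈ Φ, (∃ c : E → ℕ, β = ∑ α ∈ Δ, (c α : ℝ) • α) ∨
      (∃ c : E → ℕ, β = -(∑ α ∈ Δ, (c α : ℝ) • α))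

open Classical in
/-- The positive roots `Φ⁺` of `Φ` with respect to the base `Δ`. -/
noncomputable def posRoots (Φ Δ : Finset E) : Finset E :=
  Φ.filter fun β => ∃ c : E → ℕ, β = ∑ α ∈ Δ, (c α : ℝ) • α

/-- `ρ`, one-half the sum of the positive roots. -/
noncomputable def rho (Φ Δ : Finset E) : E := (2⁻¹ : ℝ) • ∑ β ∈ posRoots Φ Δ, β

/-- The Weyl group of `Φ`, the subgroup of `GL(E)` generated by the reflections
`s_α : x ↦ x − ⟨x,α∨⟩α` in the roots `α ∈ Φ`.  Applied to a subset `J` of the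
simple roots it yields the parabolic subgroup `W_J`. -/
def Weyl (Φ : Finset E) : Subgroup (E ≃ₗ[ℝ] E) :=
  Subgroup.closure { w : E ≃ₗ[ℝ] E | ∃ α ∈ Φ, ∀ x, w x = x - pair x α • α }

/-- The dot action `w·λ = w(λ+ρ) − ρ`. -/
noncomputable def dotAct (Φ Δ : Finset E) (w : E ≃ₗ[ℝ] E) (lam : E) : E :=
  w (lam + rho Φ Δ) - rho Φ Δ

/-- The weight lattice `X = {λ ∈ E : ⟨λ,α∨⟩ ∈ ℤ for all α ∈ Φ}`. -/
def weightLattice (Φ : Finset E) : Set E :=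
  { lam | ∀ α ∈ Φ, ∃ n : ℤ, pair lam α = (n : ℝ) }

/-- The root lattice `ℤΦ`. -/
def rootLattice (Φ : Finset E) : AddSubgroup E := AddSubgroup.closure (Φ : Set E)

/-- The bottom `p`-alcove `C_ℤ = {λ ∈ X : 0 < ⟨λ+ρ,β∨⟩ < p for all β ∈ Φ⁺}`. -/
def bottomAlcove (Φ Δ : Finset E) (p : ℕ) : Set E :=
  { lam ∈ weightLattice Φ | ∀ β ∈ posRoots Φ Δ,
      0 < pair (lam + rho Φ Δ) β ∧ pair (lam + rho Φ Δ) β < (p : ℝ) }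

/-- The closure `C̄_ℤ = {λ ∈ X : 0 ≤ ⟨λ+ρ,β∨⟩ ≤ p for all β ∈ Φ⁺}` of the
bottom `p`-alcove. -/
def closedAlcove (Φ Δ : Finset E) (p : ℕ) : Set E :=
  { lam ∈ weightLattice Φ | ∀ β ∈ posRoots Φ Δ,
      0 ≤ pair (lam + rho Φ Δ) β ∧ pair (lam + rho Φ Δ) β ≤ (p : ℝ) }

/-- Membership in `X⁺`, the set of dominant weights. -/
def isDominant (Φ Δ : Finset E) (lam : E) : Prop :=
  lam ∈ weightLattice Φ ∧ ∀ α ∈ Δ, 0 ≤ pair lam α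

/-- `a₀` is the highest short root of `Φ`: a root of minimal length such that
every root of the same length is `≤ a₀` (their difference is a nonnegative
integral combination of simple roots). -/
structure IsHighestShortRoot (Φ Δ : Finset E) (a₀ : E) : Prop where
  mem : a₀ ∈ Φ
  short : ∀ β ∈ Φ, ⟪a₀, a₀⟫ ≤ ⟪β, β⟫
  highest : ∀ β ∈ Φ, ⟪β, β⟫ = ⟪a₀, a₀⟫ →
      ∃ c : E → ℕ, a₀ - β = ∑ α ∈ Δ, (c α : ℝ) • α

section

variable {Φ Δ : Finset E}

/-! ### Coroot pairing and reflections -/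

lemma pair_add_left (x y a : E) : pair (x + y) a = pair x a + pair y a := by
  simp only [pair, inner_add_left, mul_add, add_div]

lemma pair_neg_left (x a : E) : pair (-x) a = -pair x a := by
  simp only [pair, inner_neg_left, mul_neg, neg_div]

lemma pair_neg_right (x a : E) : pair x (-a) = -pair x a := by
  simp only [pair, inner_neg_right, inner_neg_left, neg_neg, mul_neg, neg_div]

lemma pair_sub_left (x y a : E) : pair (x - y) a = pair x a - pair y a := by
  rw [sub_eq_add_neg, pair_add_left, pair_neg_left, sub_eq_add_neg]

lemma pair_smul_left (t : ℝ) (x a : E) : pair (t • x) a = t * pair x a := by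
  rw [pair, pair, real_inner_smul_left]
  ring

lemma pair_pos {x a : E} (h : 0 < ⟪x, a⟫) : 0 < pair x a := by
  have ha : a ≠ 0 := by
    rintro rfl
    simp at h
  exact div_pos (mul_pos two_pos h) (real_inner_self_pos.2 ha)

lemma pair_ne_zero {x a : E} (h : ⟪x, a⟫ ≠ 0) : pair x a ≠ 0 := by
  rcases h.lt_or_gt with hneg | hpos
  · rw [← neg_ne_zero, ← pair_neg_left]
    exact (pair_pos (by rwa [inner_neg_left, neg_pos])).ne'
  · exact (pair_pos hpos).ne'

lemma inner_nonneg_of_pair_nonneg {x a : E} (h : 0 ≤ pair x a) : 0 ≤ ⟪x, a⟫ := by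
  by_contra! hneg
  have := pair_pos (x := -x) (a := a) (by rwa [inner_neg_left, neg_pos])
  rw [pair_neg_left] at this
  linarith

lemma abs_pair_lt_two_of_norm_lt {x a : E} (h : ‖x‖ < ‖a‖) : |pair x a| < 2 := by
  have ha : 0 < ‖a‖ := (norm_nonneg x).trans_lt h
  rw [pair, real_inner_self_eq_norm_mul_norm, abs_div, abs_mul, abs_two,
    abs_of_pos (mul_pos ha ha), div_lt_iff₀ (mul_pos ha ha)]
  gcongr
  calc |⟪x, a⟫| ≤ ‖x‖ * ‖a‖ := abs_real_inner_le_norm x a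
    _ < ‖a‖ * ‖a‖ := by gcongr

/-- The reflection `s_a : x ↦ x - ⟨x, a∨⟩a`, bundled as a linear isometry; see `reflect_apply`. -/
noncomputable def reflect (a : E) : E ≃ₗᵢ[ℝ] E := (ℝ ∙ a)ᗮ.reflection

lemma reflect_apply (a x : E) : reflect a x = x - pair x a • a := by
  rw [reflect, Submodule.reflection_orthogonal_apply, Submodule.reflection_singleton_apply, pair,
    real_inner_self_eq_norm_sq, real_inner_comm x a]
  simp only [RCLike.ofReal_real_eq_id, id_eq]
  module

lemma reflect_self (a : E) : reflect a a = -a :=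
  Submodule.reflection_orthogonalComplement_singleton_eq_neg a

lemma pair_reflect_left (a x y : E) : pair (reflect a x) y = pair x (reflect a y) := by
  have hinv : reflect a (reflect a y) = y := Submodule.reflection_reflection _ y
  have hinner : ⟪reflect a x, y⟫ = ⟪x, reflect a y⟫ := by
    rw [← (reflect a).inner_map_map x, hinv]
  rw [pair, pair, hinner, (reflect a).inner_map_map y y]

/-! ### The Weyl group -/

lemma reflect_mem_Weyl {α : E} (hα : α ∈ Φ) : (reflect α).toLinearEquiv ∈ Weyl Φ :=
  Subgroup.subset_closure ⟨α, hα, reflect_apply α⟩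

lemma inner_map_map_of_mem_Weyl {w : E ≃ₗ[ℝ] E} (hw : w ∈ Weyl Φ) (x y : E) :
    ⟪w x, w y⟫ = ⟪x, y⟫ := by
  induction hw using Subgroup.closure_induction generalizing x y with
  | mem w hw =>
    obtain ⟨α, -, hw⟩ := hw
    rw [hw, hw, ← reflect_apply, ← reflect_apply, (reflect α).inner_map_map]
  | one => rfl
  | mul u v _ _ hu hv => rw [LinearEquiv.mul_apply, LinearEquiv.mul_apply, hu, hv]
  | inv u _ hu =>
    have hinv (z : E) : u (u⁻¹ z) = z := u.apply_symm_apply z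
    rw [← hu, hinv, hinv]

lemma norm_map_of_mem_Weyl {w : E ≃ₗ[ℝ] E} (hw : w ∈ Weyl Φ) (x : E) : ‖w x‖ = ‖x‖ := by
  rw [norm_eq_sqrt_real_inner, inner_map_map_of_mem_Weyl hw, ← norm_eq_sqrt_real_inner]

lemma pair_map_left_of_mem_Weyl {w : E ≃ₗ[ℝ] E} (hw : w ∈ Weyl Φ) (x y : E) :
    pair (w x) y = pair x (w⁻¹ y) := by
  have hy : w (w⁻¹ y) = y := w.apply_symm_apply y
  rw [pair, pair, ← inner_map_map_of_mem_Weyl hw x, ← inner_map_map_of_mem_Weyl hw (w⁻¹ y), hy]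

open scoped Pointwise in
lemma map_mem_iff_of_mem_Weyl (hΦ : IsRootSystem Φ) {w : E ≃ₗ[ℝ] E} (hw : w ∈ Weyl Φ) (β : E) :
    w β ∈ Φ ↔ β ∈ Φ := by
  classical
  have hle : Weyl Φ ≤ MulAction.stabilizer (E ≃ₗ[ℝ] E) Φ := by
    refine (Subgroup.closure_le _).2 ?_
    rintro w ⟨α, hα, hw⟩
    refine MulAction.mem_stabilizer_finset'.2 fun β hβ => ?_
    rw [LinearEquiv.smul_def, hw]
    exact hΦ.reflect_mem α hα β hβ
  exact MulAction.mem_stabilizer_finset.1 (hle hw) β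

lemma neg_mem_of_mem (hΦ : IsRootSystem Φ) {α : E} (hα : α ∈ Φ) : -α ∈ Φ := by
  rw [← reflect_self]
  exact (map_mem_iff_of_mem_Weyl hΦ (reflect_mem_Weyl hα) α).2 hα

/-! ### Dominance of `ρ` -/

lemma exists_dual_apply_simple_eq_one (hΔ : IsBase Φ Δ) :
    ∃ f : Module.Dual ℝ E, ∀ α ∈ Δ, f α = 1 := by
  have hli : LinearIndepOn ℝ id (Δ : Set E) := hΔ.indep
  exact Module.exists_dual_forall_apply_eq_one hli

lemma mem_posRoots {β : E} :
    β ∈ posRoots Φ Δ ↔ β ∈ Φ ∧ ∃ c : E → ℕ, β = ∑ α ∈ Δ, (c α : ℝ) • α := by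
  simp only [posRoots, Finset.mem_filter]

lemma apply_pos_of_mem_posRoots (hΦ : IsRootSystem Φ) {f : Module.Dual ℝ E}
    (hf : ∀ α ∈ Δ, 0 < f α) {β : E} (hβ : β ∈ posRoots Φ Δ) : 0 < f β := by
  obtain ⟨hβΦ, c, hc⟩ := mem_posRoots.1 hβ
  obtain ⟨α, hα, hcα⟩ : ∃ α ∈ Δ, c α ≠ 0 := by
    by_contra! hzero
    refine hΦ.ne_zero β hβΦ (hc.trans (Finset.sum_eq_zero fun α hα => ?_))
    rw [hzero α hα, Nat.cast_zero, zero_smul]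
  rw [hc, map_sum]
  simp only [map_smul, smul_eq_mul]
  refine Finset.sum_pos' (fun γ hγ => mul_nonneg (Nat.cast_nonneg _) (hf γ hγ).le) ⟨α, hα, ?_⟩
  exact mul_pos (Nat.cast_pos.2 (Nat.pos_of_ne_zero hcα)) (hf α hα)

lemma neg_mem_posRoots_iff (hΦ : IsRootSystem Φ) (hΔ : IsBase Φ Δ) {β : E} (hβ : β ∈ Φ) :
    -β ∈ posRoots Φ Δ ↔ β ∉ posRoots Φ Δ := by
  constructor
  · intro hneg hpos
    obtain ⟨f, hf⟩ := exists_dual_apply_simple_eq_one hΔ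
    have hf' : ∀ α ∈ Δ, 0 < f α := fun α hα => (hf α hα).symm ▸ one_pos
    have h₁ := apply_pos_of_mem_posRoots hΦ hf' hneg
    have h₂ := apply_pos_of_mem_posRoots hΦ hf' hpos
    rw [map_neg] at h₁
    linarith
  · intro hβpos
    rcases hΔ.root_decomp β hβ with hc | ⟨c, hc⟩
    · exact absurd (mem_posRoots.2 ⟨hβ, hc⟩) hβpos
    · exact mem_posRoots.2 ⟨neg_mem_of_mem hΦ hβ, c, neg_eq_iff_eq_neg.2 hc⟩

lemma sum_eq_two_mul_sum_posRoots (hΦ : IsRootSystem Φ) (hΔ : IsBase Φ Δ) {g : E → ℝ}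
    (hg : Function.Even g) : ∑ β ∈ Φ, g β = 2 * ∑ β ∈ posRoots Φ Δ, g β := by
  classical
  have hsub : posRoots Φ Δ ⊆ Φ := Finset.filter_subset _ _
  have hneg : ∑ β ∈ Φ \ posRoots Φ Δ, g β = ∑ β ∈ posRoots Φ Δ, g β := by
    refine Finset.sum_nbij' (-·) (-·) (fun β hβ => ?_) (fun β hβ => ?_) (fun β _ => neg_neg β)
      (fun β _ => neg_neg β) (fun β _ => (hg β).symm)
    · obtain ⟨hβΦ, hβ⟩ := Finset.mem_sdiff.1 hβ
      exact (neg_mem_posRoots_iff hΦ hΔ hβΦ).2 hβ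
    · have hβΦ := neg_mem_of_mem hΦ (hsub hβ)
      refine Finset.mem_sdiff.2 ⟨hβΦ, (neg_mem_posRoots_iff hΦ hΔ hβΦ).1 ?_⟩
      rwa [neg_neg]
  rw [← Finset.sum_sdiff hsub, hneg, two_mul]

lemma apply_rho (f : Module.Dual ℝ E) : f (rho Φ Δ) = 2⁻¹ * ∑ β ∈ posRoots Φ Δ, f β := by
  rw [rho, map_smul, map_sum, smul_eq_mul]

/-- `f ρ` equals `∑_{β ∈ Φ} |f β| / 4`, which also bounds `f (wρ)` because `w` permutes `Φ`. -/
lemma apply_map_rho_le (hΦ : IsRootSystem Φ) (hΔ : IsBase Φ Δ) {f : Module.Dual ℝ E}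
    (hf : ∀ α ∈ Δ, 0 < f α) {w : E ≃ₗ[ℝ] E} (hw : w ∈ Weyl Φ) :
    f (w (rho Φ Δ)) ≤ f (rho Φ Δ) := by
  have heven (g : Module.Dual ℝ E) : Function.Even fun β => |g β| := fun β => by
    simp only [map_neg, abs_neg]
  have hperm : ∑ β ∈ Φ, |f (w β)| = ∑ β ∈ Φ, |f β| :=
    Finset.sum_equiv w.toEquiv (fun β => (map_mem_iff_of_mem_Weyl hΦ hw β).symm) fun _ _ => rfl
  have hhalf : ∑ β ∈ posRoots Φ Δ, |f (w β)| = ∑ β ∈ posRoots Φ Δ, |f β| := by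
    refine mul_left_cancel₀ two_ne_zero ?_
    rw [← sum_eq_two_mul_sum_posRoots hΦ hΔ (heven f), ← hperm]
    exact (sum_eq_two_mul_sum_posRoots hΦ hΔ (heven (f ∘ₗ w.toLinearMap))).symm
  have hsum : ∑ β ∈ posRoots Φ Δ, f (w β) ≤ ∑ β ∈ posRoots Φ Δ, f β :=
    calc ∑ β ∈ posRoots Φ Δ, f (w β) ≤ ∑ β ∈ posRoots Φ Δ, |f (w β)| :=
          Finset.sum_le_sum fun β _ => le_abs_self _
      _ = ∑ β ∈ posRoots Φ Δ, |f β| := hhalf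
      _ = ∑ β ∈ posRoots Φ Δ, f β :=
          Finset.sum_congr rfl fun β hβ => abs_of_pos (apply_pos_of_mem_posRoots hΦ hf hβ)
  have hfw : f (w (rho Φ Δ)) = 2⁻¹ * ∑ β ∈ posRoots Φ Δ, f (w β) :=
    apply_rho (f ∘ₗ w.toLinearMap)
  rw [hfw, apply_rho]
  gcongr

lemma pair_rho_simple_nonneg (hΦ : IsRootSystem Φ) (hΔ : IsBase Φ Δ) {α : E} (hα : α ∈ Δ) :
    0 ≤ pair (rho Φ Δ) α := by
  obtain ⟨f, hf⟩ := exists_dual_apply_simple_eq_one hΔ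
  have hle : f (reflect α (rho Φ Δ)) ≤ f (rho Φ Δ) :=
    apply_map_rho_le hΦ hΔ (fun α hα => (hf α hα).symm ▸ one_pos)
      (reflect_mem_Weyl (hΔ.subset hα))
  rwa [reflect_apply, map_sub, map_smul, hf α hα, smul_eq_mul, mul_one, sub_le_self_iff] at hle

/-! ### Short roots -/

/-- The roots of minimal length; all roots are short in this sense if `Φ` is simply laced. -/
def shortRoots (Φ : Finset E) : Set E := { β | β ∈ Φ ∧ ∀ γ ∈ Φ, ‖β‖ ≤ ‖γ‖ }

lemma norm_eq_of_mem_shortRoots {F : Type*} [NormedAddCommGroup F] {Φ : Finset F} {β γ : F}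
    (hβ : β ∈ shortRoots Φ) (hγ : γ ∈ shortRoots Φ) : ‖β‖ = ‖γ‖ :=
  le_antisymm (hβ.2 γ hγ.1) (hγ.2 β hβ.1)

lemma map_mem_shortRoots (hΦ : IsRootSystem Φ) {w : E ≃ₗ[ℝ] E} (hw : w ∈ Weyl Φ) {β : E}
    (hβ : β ∈ shortRoots Φ) : w β ∈ shortRoots Φ := by
  refine ⟨(map_mem_iff_of_mem_Weyl hΦ hw β).2 hβ.1, fun γ hγ => ?_⟩
  rw [norm_map_of_mem_Weyl hw]
  exact hβ.2 γ hγ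

lemma reflect_mem_shortRoots (hΦ : IsRootSystem Φ) {α β : E} (hα : α ∈ Φ)
    (hβ : β ∈ shortRoots Φ) : reflect α β ∈ shortRoots Φ :=
  map_mem_shortRoots hΦ (reflect_mem_Weyl hα) hβ

lemma neg_mem_shortRoots (hΦ : IsRootSystem Φ) {β : E} (hβ : β ∈ shortRoots Φ) :
    -β ∈ shortRoots Φ :=
  reflect_self β ▸ reflect_mem_shortRoots hΦ hβ.1 hβ

lemma shortRoots_nonempty (hΦ : IsRootSystem Φ) : (shortRoots Φ).Nonempty :=
  Φ.exists_min_image norm hΦ.nonempty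

lemma highestShortRoot_mem_shortRoots {a₀ : E} (ha₀ : IsHighestShortRoot Φ Δ a₀) :
    a₀ ∈ shortRoots Φ := by
  refine ⟨ha₀.mem, fun γ hγ => ?_⟩
  rw [norm_eq_sqrt_real_inner, norm_eq_sqrt_real_inner]
  exact Real.sqrt_le_sqrt (ha₀.short γ hγ)

lemma pair_rho_le_of_mem_shortRoots (hΦ : IsRootSystem Φ) (hΔ : IsBase Φ Δ) {a₀ : E}
    (ha₀ : IsHighestShortRoot Φ Δ a₀) {β : E} (hβ : β ∈ shortRoots Φ) :
    pair (rho Φ Δ) β ≤ pair (rho Φ Δ) a₀ := by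
  have hlen : ⟪β, β⟫ = ⟪a₀, a₀⟫ := by
    rw [real_inner_self_eq_norm_sq, real_inner_self_eq_norm_sq,
      norm_eq_of_mem_shortRoots hβ (highestShortRoot_mem_shortRoots ha₀)]
  obtain ⟨c, hc⟩ := ha₀.highest β hβ.1 hlen
  have hdiff : 0 ≤ ⟪rho Φ Δ, a₀ - β⟫ := by
    rw [hc, inner_sum]
    refine Finset.sum_nonneg fun α hα => ?_
    rw [real_inner_smul_right]
    exact mul_nonneg (Nat.cast_nonneg _)
      (inner_nonneg_of_pair_nonneg (pair_rho_simple_nonneg hΦ hΔ hα))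
  rw [inner_sub_right, sub_nonneg] at hdiff
  rw [pair, pair, hlen]
  gcongr
  exact real_inner_self_nonneg

lemma abs_pair_map_rho_le (hΦ : IsRootSystem Φ) (hΔ : IsBase Φ Δ) {a₀ : E}
    (ha₀ : IsHighestShortRoot Φ Δ a₀) {w : E ≃ₗ[ℝ] E} (hw : w ∈ Weyl Φ) {γ : E}
    (hγ : γ ∈ shortRoots Φ) : |pair (w (rho Φ Δ)) γ| ≤ pair (rho Φ Δ) a₀ := by
  have hδ : w⁻¹ γ ∈ shortRoots Φ := map_mem_shortRoots hΦ (inv_mem hw) hγ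
  rw [pair_map_left_of_mem_Weyl hw, abs_le']
  refine ⟨pair_rho_le_of_mem_shortRoots hΦ hΔ ha₀ hδ, ?_⟩
  rw [← pair_neg_right]
  exact pair_rho_le_of_mem_shortRoots hΦ hΔ ha₀ (neg_mem_shortRoots hΦ hδ)

/-! ### Generation of the root lattice by short roots -/

lemma exists_inner_ne_zero_of_reflect_mem (hΦ : IsRootSystem Φ) {S : Set E} (hne : S.Nonempty)
    (hSΦ : S ⊆ Φ) (hS : ∀ α ∈ Φ, ∀ γ ∈ S, reflect α γ ∈ S) {β : E} (hβ : β ∈ Φ) :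
    ∃ γ ∈ S, ⟪γ, β⟫ ≠ 0 := by
  by_contra! hβS
  obtain ⟨γ₀, hγ₀⟩ := hne
  refine hΦ.irred { x ∈ Φ | ∃ γ ∈ S, ⟪γ, x⟫ ≠ 0 } { x ∈ Φ | ∀ γ ∈ S, ⟪γ, x⟫ = 0 } ?_
    ⟨γ₀, hSΦ hγ₀, γ₀, hγ₀, inner_self_ne_zero.2 (hΦ.ne_zero γ₀ (hSΦ hγ₀))⟩ ⟨β, hβ, hβS⟩ ?_
  · ext x
    simp only [Set.mem_union, Set.mem_ofPred_eq, Finset.mem_coe]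
    grind
  · rintro a ⟨ha, γ, hγ, hγa⟩ b ⟨-, hb⟩
    -- `a` is proportional to `γ - s_a γ`, a difference of elements of `S`.
    have horth : ⟪γ - reflect a γ, b⟫ = 0 := by
      rw [inner_sub_left, hb γ hγ, hb _ (hS a ha γ hγ), sub_zero]
    rw [reflect_apply, sub_sub_cancel, real_inner_smul_left] at horth
    exact (mul_eq_zero.1 horth).resolve_left (pair_ne_zero hγa)

lemma mem_closure_shortRoots (hΦ : IsRootSystem Φ) {β : E} (hβ : β ∈ Φ) :
    β ∈ AddSubgroup.closure (shortRoots Φ) := by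
  obtain ⟨γ, hγ, hγβ⟩ := exists_inner_ne_zero_of_reflect_mem hΦ (shortRoots_nonempty hΦ)
    (fun _ h => h.1) (fun _ hα _ hγ => reflect_mem_shortRoots hΦ hα hγ) hβ
  rcases le_or_gt ‖β‖ ‖γ‖ with hle | hlt
  · exact AddSubgroup.subset_closure ⟨hβ, fun δ hδ => hle.trans (hγ.2 δ hδ)⟩
  obtain ⟨n, hn⟩ := hΦ.pair_int β hβ γ hγ.1
  have hn_ne : n ≠ 0 := by
    rintro rfl
    exact pair_ne_zero hγβ (hn.trans Int.cast_zero)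
  have hn_abs : |n| < 2 := by
    have := abs_pair_lt_two_of_norm_lt hlt
    rw [hn] at this
    exact_mod_cast this
  have hdiff : (n : ℝ) • β ∈ AddSubgroup.closure (shortRoots Φ) := by
    have := sub_mem (AddSubgroup.subset_closure hγ)
      (AddSubgroup.subset_closure (reflect_mem_shortRoots hΦ hβ hγ))
    rwa [reflect_apply, sub_sub_cancel, hn] at this
  obtain rfl | rfl : n = 1 ∨ n = -1 := by grind
  all_goals simpa using hdiff

lemma rootLattice_subset_weightLattice (hΦ : IsRootSystem Φ) :
    (rootLattice Φ : Set E) ⊆ weightLattice Φ := by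
  intro σ hσ α hα
  induction hσ using AddSubgroup.closure_induction with
  | mem β hβ => exact hΦ.pair_int α hα β hβ
  | zero => exact ⟨0, by simp [pair]⟩
  | add x y _ _ hx hy =>
    obtain ⟨m, hm⟩ := hx
    obtain ⟨n, hn⟩ := hy
    exact ⟨m + n, by rw [pair_add_left, hm, hn, Int.cast_add]⟩
  | neg x _ hx =>
    obtain ⟨n, hn⟩ := hx
    exact ⟨-n, by rw [pair_neg_left, hn, Int.cast_neg]⟩

lemma exists_multiset_shortRoots_of_mem_rootLattice (hΦ : IsRootSystem Φ) {σ : E}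
    (hσ : σ ∈ rootLattice Φ) : ∃ M : Multiset E, (∀ β ∈ M, β ∈ shortRoots Φ) ∧ M.sum = σ := by
  have hle : rootLattice Φ ≤ AddSubgroup.closure (shortRoots Φ) :=
    (AddSubgroup.closure_le _).2 fun β hβ => mem_closure_shortRoots hΦ hβ
  have hneg : shortRoots Φ ∪ -shortRoots Φ = shortRoots Φ :=
    Set.union_eq_left.2 fun β hβ => neg_neg β ▸ neg_mem_shortRoots hΦ hβ
  have hmem : σ ∈ (AddSubgroup.closure (shortRoots Φ)).toAddSubmonoid := hle hσ
  rw [AddSubgroup.closure_toAddSubmonoid, hneg] at hmem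
  exact AddSubmonoid.exists_multiset_of_mem_closure hmem

/-! ### Small elements of the root lattice -/

lemma exists_mem_inner_sum_pos {M : Multiset E} (hM : M.sum ≠ 0) : ∃ β ∈ M, 0 < ⟪M.sum, β⟫ := by
  by_contra! hle
  have hself : ⟪M.sum, M.sum⟫ = (M.map fun β => ⟪M.sum, β⟫).sum :=
    map_multiset_sum (innerₗ E M.sum) M
  have hnonpos : (M.map fun β => ⟪M.sum, β⟫).sum ≤ 0 := by
    simpa using Multiset.sum_map_le_sum_map (fun β => ⟪M.sum, β⟫) (fun _ => (0 : ℝ)) hle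
  exact hnonpos.not_gt (hself ▸ real_inner_self_pos.2 hM)

lemma multiset_sum_eq_zero_of_pair_lt_two (hΦ : IsRootSystem Φ) {S : Set E} (hSΦ : S ⊆ Φ)
    (hS : ∀ α ∈ S, ∀ γ ∈ S, reflect α γ ∈ S) (M : Multiset E) (hM : ∀ β ∈ M, β ∈ S)
    (hlt : ∀ γ ∈ S, pair M.sum γ < 2) : M.sum = 0 := by
  induction M using Multiset.strongInductionOn with
  | ih M ih =>
  by_contra hne
  obtain ⟨β, hβM, hpos⟩ := exists_mem_inner_sum_pos hne
  have hβ := hM β hβM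
  have hpair : pair M.sum β = 1 := by
    have hlattice : M.sum ∈ rootLattice Φ :=
      multiset_sum_mem M fun γ hγ => AddSubgroup.subset_closure (hSΦ (hM γ hγ))
    obtain ⟨n, hn⟩ := rootLattice_subset_weightLattice hΦ hlattice β (hSΦ hβ)
    have hn_pos : (0 : ℝ) < n := hn ▸ pair_pos hpos
    have hn_lt : (n : ℝ) < 2 := hn ▸ hlt β hβ
    norm_cast at hn_pos hn_lt
    rw [hn, show n = 1 by omega, Int.cast_one]
  obtain ⟨N, rfl⟩ := Multiset.exists_cons_of_mem hβM
  have hreflect : reflect β (β ::ₘ N).sum = N.sum := by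
    rw [reflect_apply, hpair, one_smul, Multiset.sum_cons, add_sub_cancel_left]
  have hN : N.sum = 0 := by
    refine ih N (Multiset.lt_cons_self N β) (fun γ hγ => hM γ (Multiset.mem_cons_of_mem hγ)) ?_
    intro γ hγ
    rw [← hreflect, pair_reflect_left]
    exact hlt _ (hS β hβ γ hγ)
  exact hne ((map_eq_zero_iff _ (reflect β).injective).1 (hreflect.trans hN))

lemma eq_zero_of_mem_rootLattice_of_pair_lt_two (hΦ : IsRootSystem Φ) {σ : E}
    (hσ : σ ∈ rootLattice Φ) (hlt : ∀ γ ∈ shortRoots Φ, pair σ γ < 2) : σ = 0 := by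
  obtain ⟨M, hM, rfl⟩ := exists_multiset_shortRoots_of_mem_rootLattice hΦ hσ
  exact multiset_sum_eq_zero_of_pair_lt_two hΦ (fun _ h => h.1)
    (fun _ hα _ hγ => reflect_mem_shortRoots hΦ hα.1 hγ) M hM hlt

theorem statement2_general (hΦ : IsRootSystem Φ) (hΔ : IsBase Φ Δ)
    {a₀ : E} (ha₀ : IsHighestShortRoot Φ Δ a₀)
    {h : ℝ} (hcox : h = pair (rho Φ Δ) a₀ + 1) {p : ℝ} (hbig : 2 * (h - 1) < p)
    {w₁ w₂ w₃ : E ≃ₗ[ℝ] E} (hw₁ : w₁ ∈ Weyl Φ) (hw₂ : w₂ ∈ Weyl Φ) (hw₃ : w₃ ∈ Weyl Φ)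
    {σ : E} (hσ : σ ∈ rootLattice Φ)
    (heq : dotAct Φ Δ w₁ 0 + dotAct Φ Δ w₂ 0 = dotAct Φ Δ w₃ 0 + p • σ) : σ = 0 := by
  refine eq_zero_of_mem_rootLattice_of_pair_lt_two hΦ hσ fun γ hγ => ?_
  have hbound {w : E ≃ₗ[ℝ] E} (hw : w ∈ Weyl Φ) : |pair (w (rho Φ Δ)) γ| ≤ h - 1 := by
    rw [hcox, add_sub_cancel_right]
    exact abs_pair_map_rho_le hΦ hΔ ha₀ hw hγ
  have hp : 0 < p := by linarith [(abs_nonneg _).trans (hbound hw₁)]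
  have hpair : pair (w₁ (rho Φ Δ)) γ + pair (w₂ (rho Φ Δ)) γ
      = pair (w₃ (rho Φ Δ)) γ + pair (rho Φ Δ) γ + p * pair σ γ := by
    have := congrArg (pair · γ) heq
    simp only [dotAct, zero_add, pair_add_left, pair_sub_left, pair_smul_left] at this
    linarith
  have hupper : p * pair σ γ < p * 2 := by
    have h₁ := (abs_le.1 (hbound hw₁)).2
    have h₂ := (abs_le.1 (hbound hw₂)).2
    have h₃ := (abs_le.1 (hbound hw₃)).1
    have hone : -(h - 1) ≤ pair (rho Φ Δ) γ := (abs_le.1 (hbound (one_mem _))).1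
    linarith
  exact lt_of_mul_lt_mul_left hupper hp.le

end

/-- Let `p` be a prime with `p > 2(h−1)`, where `h` is the Coxeter
number of `Φ`.  Let `w₁, w₂, w₃ ∈ W` and suppose `w₁·0 + w₂·0 = w₃·0 + pσ` for
some `σ ∈ ℤΦ`.  Then `σ = 0`. -/
theorem statement2
    (Φ Δ : Finset E) (hΦ : IsRootSystem Φ) (hΔ : IsBase Φ Δ)
    (a₀ : E) (ha₀ : IsHighestShortRoot Φ Δ a₀)
    (h : ℕ) (hcox : (h : ℝ) = pair (rho Φ Δ) a₀ + 1)
    (p : ℕ) (hp : p.Prime) (hbig : 2 * (h - 1) < p)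
    (w₁ w₂ w₃ : E ≃ₗ[ℝ] E) (hw₁ : w₁ ∈ Weyl Φ) (hw₂ : w₂ ∈ Weyl Φ) (hw₃ : w₃ ∈ Weyl Φ)
    (σ : E) (hσ : σ ∈ rootLattice Φ)
    (heq : dotAct Φ Δ w₁ 0 + dotAct Φ Δ w₂ 0 = dotAct Φ Δ w₃ 0 + (p : ℝ) • σ) :
    σ = 0 := by
  -- The truncated subtraction `h - 1` in `ℕ` is at least the real number `h - 1`.
  have hcast : 2 * (h : ℝ) < p + 2 := by exact_mod_cast (by omega : 2 * h < p + 2)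
  exact statement2_general hΦ hΔ ha₀ hcox (by linarith) hw₁ hw₂ hw₃ hσ heq

end PaperDNN
end

section
/- Let Φ be a reduced irreducible root system and let σ be a nonzero dominant weight lying in the root lattice, i.e., σ ∈ X⁺ ∩ ℤΦ with σ ≠ 0. Then (σ, α₀∨) ≥ 2, where α₀ is the highest short root of Φ (so that α₀∨ is the highest root of the dual root system Φ∨). Equivalently, there exists a positive root α ∈ Φ⁺ with (σ, α∨) ≥ 2. -/
/-!
Every element `σ` of the root lattice is a sum of roots with pairwise nonnegative inner products:
in a sum with the fewest terms, two terms `β`, `γ` with `(β, γ) < 0` could be replaced by `β + γ`,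
which is a root or zero. If `σ ≠ 0` and `β` is one of the terms, then `(σ, β) ≥ (β, β)`, that is,
`(σ, β∨) ≥ 2`.

It remains to see `(σ, β∨) ≤ (σ, α₀∨)` for dominant `σ` and every root `β`. If `β` is short, then
`α₀ - β` is a nonnegative combination of simple roots. If `β` is long, then irreducibility gives a
short root `γ` with `(γ, β) > 0`. Comparing lengths, `(γ, β∨) = 1` and `(β, γ∨) ≥ 2`, so `β` is the
sum of the short roots `γ` and `β - γ`, while `(β, β) ≥ 2 (α₀, α₀)`.
-/

open scoped RealInnerProductSpace

namespace PaperDNN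

variable {E : Type*} [NormedAddCommGroup E] [InnerProductSpace ℝ E]

section Pairing

theorem pair_mul_inner_self (x a : E) : pair x a * ⟪a, a⟫ = 2 * ⟪x, a⟫ := by
  rcases eq_or_ne a 0 with rfl | ha
  · simp
  · exact div_mul_cancel₀ _ (real_inner_self_pos.2 ha).ne'

theorem pair_nonneg_iff {x a : E} : 0 ≤ pair x a ↔ 0 ≤ ⟪x, a⟫ := by
  rcases eq_or_ne a 0 with rfl | ha
  · simp [pair]
  · rw [pair, le_div_iff₀ (real_inner_self_pos.2 ha), zero_mul, mul_nonneg_iff_of_pos_left two_pos]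

theorem pair_pos_iff {x a : E} : 0 < pair x a ↔ 0 < ⟪x, a⟫ := by
  rcases eq_or_ne a 0 with rfl | ha
  · simp [pair]
  · rw [pair, lt_div_iff₀ (real_inner_self_pos.2 ha), zero_mul, mul_pos_iff_of_pos_left two_pos]

theorem two_le_pair_iff {x a : E} (ha : a ≠ 0) : 2 ≤ pair x a ↔ ⟪a, a⟫ ≤ ⟪x, a⟫ := by
  rw [pair, le_div_iff₀ (real_inner_self_pos.2 ha), mul_le_mul_iff_right₀ two_pos]

theorem pair_self {a : E} (ha : a ≠ 0) : pair a a = 2 :=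
  mul_div_cancel_right₀ _ (real_inner_self_pos.2 ha).ne'

theorem pair_mul_inner_self_comm (x a : E) : pair x a * ⟪a, a⟫ = pair a x * ⟪x, x⟫ := by
  rw [pair_mul_inner_self, pair_mul_inner_self, real_inner_comm]

theorem inner_self_sub_pair_smul (x a : E) :
    ⟪x - pair x a • a, x - pair x a • a⟫ = ⟪x, x⟫ := by
  rw [real_inner_sub_sub_self, real_inner_smul_left, real_inner_smul_right, real_inner_smul_right]
  linear_combination pair x a * pair_mul_inner_self x a

theorem eq_of_two_le_pair {a b : E} (hab : 2 ≤ pair a b) (hba : 2 ≤ pair b a) : a = b := by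
  have inner_ge_right : 2 * ⟪b, b⟫ ≤ 2 * ⟪a, b⟫ := by
    rw [← pair_mul_inner_self a b]
    exact mul_le_mul_of_nonneg_right hab real_inner_self_nonneg
  have inner_ge_left : 2 * ⟪a, a⟫ ≤ 2 * ⟪a, b⟫ := by
    rw [real_inner_comm b a, ← pair_mul_inner_self b a]
    exact mul_le_mul_of_nonneg_right hba real_inner_self_nonneg
  rw [← sub_eq_zero, ← real_inner_self_nonpos, real_inner_sub_sub_self]
  linarith

end Pairing

/-- A crystallographic root system in the span of its elements: a reflection-stable set of nonzero
vectors with integral Cartan numbers. Unlike in `IsRootSystem`, it need be neither reduced nor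
irreducible nor spanning. -/
structure IsCrystallographic (Φ : Finset E) : Prop where
  ne_zero : ∀ α ∈ Φ, α ≠ 0
  reflect_mem : ∀ α ∈ Φ, ∀ β ∈ Φ, β - pair β α • α ∈ Φ
  pair_int : ∀ α ∈ Φ, ∀ β ∈ Φ, ∃ n : ℤ, pair β α = (n : ℝ)

/-- Irreducibility of a set of roots, in the form of `IsRootSystem.irred`: the set is not the union
of two nonempty mutually orthogonal subsets. -/
def IsIrreducible (Φ : Finset E) : Prop :=
  ∀ S T : Set E, S ∪ T = (Φ : Set E) → S.Nonempty → T.Nonempty →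
    (∀ a ∈ S, ∀ b ∈ T, ⟪a, b⟫ = 0) → False

theorem IsRootSystem.isCrystallographic {Φ : Finset E} (hΦ : IsRootSystem Φ) :
    IsCrystallographic Φ :=
  ⟨hΦ.ne_zero, hΦ.reflect_mem, hΦ.pair_int⟩

theorem IsRootSystem.isIrreducible {Φ : Finset E} (hΦ : IsRootSystem Φ) : IsIrreducible Φ :=
  hΦ.irred

namespace IsCrystallographic

variable {Φ : Finset E} {a b β γ σ : E}

theorem neg_mem (hΦ : IsCrystallographic Φ) (ha : a ∈ Φ) : -a ∈ Φ := by
  have reflect_self := hΦ.reflect_mem a ha a ha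
  rwa [pair_self (hΦ.ne_zero a ha), two_smul, sub_add_cancel_left] at reflect_self

theorem sub_mem_of_pair_eq_one (hΦ : IsCrystallographic Φ) (ha : a ∈ Φ) (hb : b ∈ Φ)
    (hab : pair a b = 1) : a - b ∈ Φ := by
  simpa only [hab, one_smul] using hΦ.reflect_mem b hb a ha

theorem pair_eq_one_or_two_le_pair (hΦ : IsCrystallographic Φ) (ha : a ∈ Φ) (hb : b ∈ Φ)
    (hab : 0 < ⟪a, b⟫) : pair a b = 1 ∨ 2 ≤ pair a b := by
  obtain ⟨n, hn⟩ := hΦ.pair_int b hb a ha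
  have hpos : 0 < n := by exact_mod_cast hn ▸ pair_pos_iff.2 hab
  rw [hn]
  exact_mod_cast (by lia : n = 1 ∨ 2 ≤ n)

theorem sub_mem_or_eq (hΦ : IsCrystallographic Φ) (ha : a ∈ Φ) (hb : b ∈ Φ)
    (hab : 0 < ⟪a, b⟫) : a - b ∈ Φ ∨ a = b := by
  rcases hΦ.pair_eq_one_or_two_le_pair ha hb hab with hone | htwo
  · exact .inl (hΦ.sub_mem_of_pair_eq_one ha hb hone)
  rcases hΦ.pair_eq_one_or_two_le_pair hb ha (by rwa [real_inner_comm]) with hone' | htwo'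
  · exact .inl (neg_sub b a ▸ hΦ.neg_mem (hΦ.sub_mem_of_pair_eq_one hb ha hone'))
  · exact .inr (eq_of_two_le_pair htwo htwo')

theorem add_mem_or_add_eq_zero (hΦ : IsCrystallographic Φ) (ha : a ∈ Φ) (hb : b ∈ Φ)
    (hab : ⟪a, b⟫ < 0) : a + b ∈ Φ ∨ a + b = 0 := by
  have hneg : 0 < ⟪a, -b⟫ := by rwa [inner_neg_right, neg_pos]
  simpa only [sub_neg_eq_add, eq_neg_iff_add_eq_zero] using
    hΦ.sub_mem_or_eq ha (hΦ.neg_mem hb) hneg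

section RootLattice

theorem exists_multiset_sum_eq (hΦ : IsCrystallographic Φ) (hσ : σ ∈ rootLattice Φ) :
    ∃ m : Multiset E, (∀ β ∈ m, β ∈ Φ) ∧ m.sum = σ := by
  rw [rootLattice, ← AddSubgroup.mem_toAddSubmonoid, AddSubgroup.closure_toAddSubmonoid] at hσ
  obtain ⟨m, hm, hsum⟩ := AddSubmonoid.exists_multiset_of_mem_closure hσ
  refine ⟨m, fun β hβ => (hm β hβ).elim id fun hneg => ?_, hsum⟩
  exact neg_neg β ▸ hΦ.neg_mem (Set.mem_neg.1 hneg)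

theorem exists_multiset_card_lt (hΦ : IsCrystallographic Φ) {u : Multiset E}
    (hβ : β ∈ Φ) (hγ : γ ∈ Φ) (hu : ∀ x ∈ u, x ∈ Φ) (hβγ : ⟪β, γ⟫ < 0) :
    ∃ m : Multiset E, (∀ x ∈ m, x ∈ Φ) ∧ m.sum = (β ::ₘ γ ::ₘ u).sum ∧
      m.card < (β ::ₘ γ ::ₘ u).card := by
  rcases hΦ.add_mem_or_add_eq_zero hβ hγ hβγ with hmem | hzero
  · exact ⟨(β + γ) ::ₘ u, Multiset.forall_mem_cons.2 ⟨hmem, hu⟩, by simp [add_assoc], by simp⟩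
  · exact ⟨u, hu, by simp [← add_assoc, hzero], by simp⟩

theorem exists_multiset_inner_nonneg (hΦ : IsCrystallographic Φ) (hσ : σ ∈ rootLattice Φ) :
    ∃ m : Multiset E, (∀ β ∈ m, β ∈ Φ) ∧ m.sum = σ ∧
      ∀ β t, m = β ::ₘ t → ∀ γ ∈ t, 0 ≤ ⟪β, γ⟫ := by
  obtain ⟨m, ⟨hm, hsum⟩, hmin⟩ :=
    exists_minimalFor_of_wellFoundedLT
      (fun m : Multiset E => (∀ β ∈ m, β ∈ Φ) ∧ m.sum = σ) Multiset.card
      (hΦ.exists_multiset_sum_eq hσ)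
  refine ⟨m, hm, hsum, ?_⟩
  rintro β t rfl γ hγ
  by_contra! hneg
  obtain ⟨u, rfl⟩ := Multiset.exists_cons_of_mem hγ
  simp only [Multiset.forall_mem_cons] at hm
  obtain ⟨m', hm', hsum', hcard⟩ := hΦ.exists_multiset_card_lt hm.1 hm.2.1 hm.2.2 hneg
  exact hcard.not_ge (hmin ⟨hm', hsum'.trans hsum⟩ hcard.le)

theorem exists_two_le_pair (hΦ : IsCrystallographic Φ) (hσ : σ ∈ rootLattice Φ) (hne : σ ≠ 0) :
    ∃ β ∈ Φ, 2 ≤ pair σ β := by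
  obtain ⟨m, hm, rfl, hinner⟩ := hΦ.exists_multiset_inner_nonneg hσ
  obtain ⟨β, hβ⟩ : ∃ β, β ∈ m :=
    Multiset.exists_mem_of_ne_zero fun hzero => hne (by rw [hzero, Multiset.sum_zero])
  obtain ⟨t, rfl⟩ := Multiset.exists_cons_of_mem hβ
  have ht : 0 ≤ ⟪β, t.sum⟫ := by
    rw [show ⟪β, t.sum⟫ = (t.map fun γ => ⟪β, γ⟫).sum from map_multiset_sum (innerₗ E β) t]
    exact Multiset.sum_nonneg (Multiset.forall_mem_map_iff.2 (hinner β t rfl))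
  refine ⟨β, hm β hβ, (two_le_pair_iff (hΦ.ne_zero β (hm β hβ))).2 ?_⟩
  rw [Multiset.sum_cons, inner_add_left, real_inner_comm β t.sum]
  exact le_add_of_nonneg_right ht

end RootLattice

section RootLengths

theorem two_le_pair_of_inner_self_lt (hΦ : IsCrystallographic Φ) (hβ : β ∈ Φ) (hγ : γ ∈ Φ)
    (hlt : ⟪γ, γ⟫ < ⟪β, β⟫) (hpos : 0 < ⟪γ, β⟫) : 2 ≤ pair β γ := by
  have hpos' : 0 < ⟪β, γ⟫ := by rwa [real_inner_comm]
  refine (hΦ.pair_eq_one_or_two_le_pair hβ hγ hpos').resolve_left fun hone => ?_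
  have one_le : 1 ≤ pair γ β := by
    rcases hΦ.pair_eq_one_or_two_le_pair hγ hβ hpos with h | h <;> linarith
  have hlen : ⟪γ, γ⟫ = pair γ β * ⟪β, β⟫ := by rw [pair_mul_inner_self_comm, hone, one_mul]
  exact hlt.not_ge (hlen ▸ le_mul_of_one_le_left real_inner_self_nonneg one_le)

theorem pair_eq_one_of_inner_self_lt (hΦ : IsCrystallographic Φ) (hβ : β ∈ Φ) (hγ : γ ∈ Φ)
    (hlt : ⟪γ, γ⟫ < ⟪β, β⟫) (hpos : 0 < ⟪γ, β⟫) : pair γ β = 1 := by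
  refine (hΦ.pair_eq_one_or_two_le_pair hγ hβ hpos).resolve_right fun htwo => hlt.ne ?_
  rw [eq_of_two_le_pair htwo (hΦ.two_le_pair_of_inner_self_lt hβ hγ hlt hpos)]

-- Reflections permute the roots of a given length, so a root orthogonal to all of these is
-- orthogonal to every root that is not.
theorem exists_inner_self_eq_inner_ne_zero (hΦ : IsCrystallographic Φ) (hirr : IsIrreducible Φ)
    (ha : a ∈ Φ) (hβ : β ∈ Φ) : ∃ γ ∈ Φ, ⟪γ, γ⟫ = ⟪a, a⟫ ∧ ⟪γ, β⟫ ≠ 0 := by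
  by_contra! hβ_orth
  let T : Set E := {t | t ∈ Φ ∧ ∃ γ ∈ Φ, ⟪γ, γ⟫ = ⟪a, a⟫ ∧ ⟪γ, t⟫ ≠ 0}
  have haT : a ∈ T := ⟨ha, a, ha, rfl, (real_inner_self_pos.2 (hΦ.ne_zero a ha)).ne'⟩
  have hβT : β ∉ T := fun ⟨_, γ, hγ, hlen, hne⟩ => hne (hβ_orth γ hγ hlen)
  refine hirr (Φ \ T) T (Set.sdiff_union_of_subset fun t ht => ht.1) ⟨β, hβ, hβT⟩ ⟨a, haT⟩ ?_
  rintro s ⟨hs, hsT⟩ t ⟨ht, γ, hγ, hlen, hγt⟩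
  have hs_orth : ∀ δ ∈ Φ, ⟪δ, δ⟫ = ⟪a, a⟫ → ⟪δ, s⟫ = 0 := fun δ hδ hδlen =>
    by_contra fun hne => hsT ⟨hs, δ, hδ, hδlen, hne⟩
  have hpair : pair γ t ≠ 0 := fun hzero =>
    hγt (by simpa [hzero] using pair_mul_inner_self γ t)
  have hreflect := hs_orth _ (hΦ.reflect_mem t ht γ hγ) ((inner_self_sub_pair_smul γ t).trans hlen)
  rw [inner_sub_left, hs_orth γ hγ hlen, real_inner_smul_left, zero_sub, neg_eq_zero] at hreflect
  rw [real_inner_comm]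
  exact (mul_eq_zero.1 hreflect).resolve_left hpair

theorem exists_inner_self_eq_inner_pos (hΦ : IsCrystallographic Φ) (hirr : IsIrreducible Φ)
    (ha : a ∈ Φ) (hβ : β ∈ Φ) : ∃ γ ∈ Φ, ⟪γ, γ⟫ = ⟪a, a⟫ ∧ 0 < ⟪γ, β⟫ := by
  obtain ⟨γ, hγ, hlen, hne⟩ := hΦ.exists_inner_self_eq_inner_ne_zero hirr ha hβ
  rcases hne.lt_or_gt with hneg | hpos
  · exact ⟨-γ, hΦ.neg_mem hγ, by rwa [inner_neg_neg], by rwa [inner_neg_left, neg_pos]⟩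
  · exact ⟨γ, hγ, hlen, hpos⟩

theorem two_mul_inner_self_le_of_lt (hΦ : IsCrystallographic Φ) (hirr : IsIrreducible Φ)
    (ha : a ∈ Φ) (hβ : β ∈ Φ) (hlt : ⟪a, a⟫ < ⟪β, β⟫) : 2 * ⟪a, a⟫ ≤ ⟪β, β⟫ := by
  obtain ⟨γ, hγ, hlen, hpos⟩ := hΦ.exists_inner_self_eq_inner_pos hirr ha hβ
  rw [← hlen] at hlt ⊢
  calc 2 * ⟪γ, γ⟫ ≤ pair β γ * ⟪γ, γ⟫ :=
        mul_le_mul_of_nonneg_right (hΦ.two_le_pair_of_inner_self_lt hβ hγ hlt hpos)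
          real_inner_self_nonneg
    _ = pair γ β * ⟪β, β⟫ := pair_mul_inner_self_comm β γ
    _ = ⟪β, β⟫ := by rw [hΦ.pair_eq_one_of_inner_self_lt hβ hγ hlt hpos, one_mul]

theorem exists_add_eq_of_inner_self_lt (hΦ : IsCrystallographic Φ) (hirr : IsIrreducible Φ)
    (ha : a ∈ Φ) (hβ : β ∈ Φ) (hlt : ⟪a, a⟫ < ⟪β, β⟫) :
    ∃ γ ∈ Φ, ∃ δ ∈ Φ, ⟪γ, γ⟫ = ⟪a, a⟫ ∧ ⟪δ, δ⟫ = ⟪a, a⟫ ∧ γ + δ = β := by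
  obtain ⟨γ, hγ, hlen, hpos⟩ := hΦ.exists_inner_self_eq_inner_pos hirr ha hβ
  have hone := hΦ.pair_eq_one_of_inner_self_lt hβ hγ (hlen ▸ hlt) hpos
  have hδ := hΦ.neg_mem (hΦ.sub_mem_of_pair_eq_one hγ hβ hone)
  refine ⟨γ, hγ, -(γ - β), hδ, hlen, ?_, by abel⟩
  have hreflect := inner_self_sub_pair_smul γ β
  rwa [hone, one_smul, hlen, ← inner_neg_neg] at hreflect

end RootLengths

end IsCrystallographic

section Dominant

variable {Φ Δ : Finset E} {a₀ β σ : E}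

theorem inner_sum_smul_nonneg (hσ : ∀ α ∈ Δ, 0 ≤ pair σ α) (c : E → ℕ) :
    0 ≤ ⟪σ, ∑ α ∈ Δ, (c α : ℝ) • α⟫ := by
  rw [inner_sum]
  refine Finset.sum_nonneg fun α hα => ?_
  rw [real_inner_smul_right]
  exact mul_nonneg (Nat.cast_nonneg _) (pair_nonneg_iff.1 (hσ α hα))

theorem IsBase.mem_posRoots_of_pair_pos (hΔ : IsBase Φ Δ) (hσ : ∀ α ∈ Δ, 0 ≤ pair σ α)
    (hβ : β ∈ Φ) (hpos : 0 < pair σ β) : β ∈ posRoots Φ Δ := by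
  classical
  refine Finset.mem_filter.2 ⟨hβ, (hΔ.root_decomp β hβ).resolve_right ?_⟩
  rintro ⟨c, rfl⟩
  rw [pair_pos_iff, inner_neg_right, neg_pos] at hpos
  exact hpos.not_ge (inner_sum_smul_nonneg hσ c)

namespace IsHighestShortRoot

theorem inner_le_inner (ha₀ : IsHighestShortRoot Φ Δ a₀) (hσ : ∀ α ∈ Δ, 0 ≤ pair σ α)
    (hβ : β ∈ Φ) (hlen : ⟪β, β⟫ = ⟪a₀, a₀⟫) : ⟪σ, β⟫ ≤ ⟪σ, a₀⟫ := by
  obtain ⟨c, hc⟩ := ha₀.highest β hβ hlen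
  rw [← sub_nonneg, ← inner_sub_right, hc]
  exact inner_sum_smul_nonneg hσ c

theorem inner_nonneg (ha₀ : IsHighestShortRoot Φ Δ a₀) (hΦ : IsCrystallographic Φ)
    (hσ : ∀ α ∈ Δ, 0 ≤ pair σ α) : 0 ≤ ⟪σ, a₀⟫ := by
  have hneg := ha₀.inner_le_inner hσ (hΦ.neg_mem ha₀.mem) (inner_neg_neg a₀ a₀)
  rwa [inner_neg_right, neg_le_self_iff] at hneg

theorem pair_le_pair (ha₀ : IsHighestShortRoot Φ Δ a₀) (hΦ : IsCrystallographic Φ)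
    (hirr : IsIrreducible Φ) (hσ : ∀ α ∈ Δ, 0 ≤ pair σ α) (hβ : β ∈ Φ) :
    pair σ β ≤ pair σ a₀ := by
  rcases (ha₀.short β hβ).eq_or_lt with hshort | hlong
  · rw [pair, pair, ← hshort]
    have := ha₀.inner_le_inner hσ hβ hshort.symm
    gcongr
    exact real_inner_self_nonneg
  have hlen := hΦ.two_mul_inner_self_le_of_lt hirr ha₀.mem hβ hlong
  obtain ⟨γ, hγ, δ, hδ, hγlen, hδlen, rfl⟩ :=
    hΦ.exists_add_eq_of_inner_self_lt hirr ha₀.mem hβ hlong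
  have hinner : ⟪σ, γ + δ⟫ ≤ 2 * ⟪σ, a₀⟫ := by
    rw [inner_add_right, two_mul]
    exact add_le_add (ha₀.inner_le_inner hσ hγ hγlen) (ha₀.inner_le_inner hσ hδ hδlen)
  have ha₀_pos : 0 < ⟪a₀, a₀⟫ := real_inner_self_pos.2 (hΦ.ne_zero a₀ ha₀.mem)
  have ha₀_nonneg := ha₀.inner_nonneg hΦ hσ
  calc pair σ (γ + δ) ≤ 2 * (2 * ⟪σ, a₀⟫) / (2 * ⟪a₀, a₀⟫) := by
        rw [pair]
        gcongr
    _ = pair σ a₀ := mul_div_mul_left _ _ two_ne_zero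

end IsHighestShortRoot

end Dominant

theorem statement4_general {Φ Δ : Finset E} (hΦ : IsCrystallographic Φ) (hirr : IsIrreducible Φ)
    (hΔ : IsBase Φ Δ) {a₀ : E} (ha₀ : IsHighestShortRoot Φ Δ a₀) {σ : E}
    (hσ : ∀ α ∈ Δ, 0 ≤ pair σ α) (hσΦ : σ ∈ rootLattice Φ) (hne : σ ≠ 0) :
    2 ≤ pair σ a₀ ∧ ∃ α ∈ posRoots Φ Δ, 2 ≤ pair σ α := by
  obtain ⟨β, hβ, htwo⟩ := hΦ.exists_two_le_pair hσΦ hne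
  have htwo₀ : 2 ≤ pair σ a₀ := htwo.trans (ha₀.pair_le_pair hΦ hirr hσ hβ)
  exact ⟨htwo₀, a₀, hΔ.mem_posRoots_of_pair_pos hσ ha₀.mem (two_pos.trans_le htwo₀), htwo₀⟩

/-- Let `σ` be a nonzero dominant weight lying in the root lattice,
i.e. `σ ∈ X⁺ ∩ ℤΦ`, `σ ≠ 0`.  Then `(σ, α₀∨) ≥ 2` where `α₀` is the highest
short root; equivalently, there exists a positive root `α` with `(σ, α∨) ≥ 2`. -/
theorem statement4
    (Φ Δ : Finset E) (hΦ : IsRootSystem Φ) (hΔ : IsBase Φ Δ)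
    (a₀ : E) (ha₀ : IsHighestShortRoot Φ Δ a₀)
    (σ : E) (hdom : isDominant Φ Δ σ) (hσΦ : σ ∈ rootLattice Φ) (hne : σ ≠ 0) :
    2 ≤ pair σ a₀ ∧ ∃ α ∈ posRoots Φ Δ, 2 ≤ pair σ α :=
  statement4_general hΦ.isCrystallographic hΦ.isIrreducible hΔ ha₀ hdom.2 hσΦ hne

end PaperDNN
end
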